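/- Suppose ν is a Borel probability measure on X such that for every Γ-invariant measurable function g : X × X → [0,∞] one has ∫_X (∫_X g(x, y) dμ(y)) dν(x) = ∫_X (∫_X g(y, x) dμ(y)) dν(x). Then: (a) Γ is unimodular; (b) ∫_B h dμ < ∞; and (c) there exists a constant b ∈ (0,∞), namely b = (∫_B h dμ)⁻¹, such that for every Borel set C ⊆ X, ∫_X ‖{γ ∈ Γ : γ⁻¹x ∈ C}‖ dν(x) = b · μ(C). -/

import Mathlib

open MeasureTheory ENNReal

/-!
Let `ρ x` be the push-forward of Haar measure under `γ ↦ γ⁻¹ • x`, and let `η = ∫ ρ x dν x`.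
Averaging `f ⊗ k` over the diagonal action gives an invariant function on `X × X`, and mass
transport for it reads `η(f) μ(k) = η(k) μ(f)`: the measures `η` and `μ` are proportional. The
function `1_B h` has `ρ x`-integral `1` for every `x`, so taking it for `k` identifies the factor.
Finally, `η` inherits invariance from `μ`, whereas translating `ρ x` by `α⁻¹` amounts to
right-translating Haar measure by `α`, which scales `η` by a modular factor; the factor is thus `1`.
-/

lemma ne_top_of_sigmaFinite_smul {α : Type*} [MeasurableSpace α] {c : ℝ≥0∞} {μ : Measure α}
    [SigmaFinite (c • μ)] (h : c • μ ≠ 0) : c ≠ ∞ := by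
  rintro rfl
  have huniv : 0 < (∞ • μ) Set.univ := Measure.measure_univ_pos.2 h
  obtain ⟨t, -, -, ht_pos, ht_lt⟩ := Measure.exists_subset_measure_lt_top .univ huniv
  rw [Measure.smul_apply, smul_eq_mul] at ht_pos ht_lt
  exact ht_lt.ne (ENNReal.top_mul (right_ne_zero_of_mul ht_pos.ne'))

lemma eq_haarScalarFactor_smul_of_sigmaCompact {G : Type*} [Group G] [TopologicalSpace G]
    [IsTopologicalGroup G] [LocallyCompactSpace G] [SigmaCompactSpace G]
    [MeasurableSpace G] [BorelSpace G] (m' m : Measure G) [m.IsHaarMeasure]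
    [IsFiniteMeasureOnCompacts m'] [m'.IsMulLeftInvariant] :
    m' = Measure.haarScalarFactor m' m • m := by
  ext s _
  have hs : s = ⋃ n, s ∩ compactCovering G n := by
    rw [← Set.inter_iUnion, iUnion_compactCovering, Set.inter_univ]
  have hmono : Monotone fun n => s ∩ compactCovering G n := fun _ _ h =>
    Set.inter_subset_inter_right _ (compactCovering_subset G h)
  rw [hs, hmono.measure_iUnion, hmono.measure_iUnion]
  exact iSup_congr fun n => Measure.measure_isMulInvariant_eq_smul_of_isCompact_closure m' m
    ((isCompact_compactCovering G n).closure_of_subset Set.inter_subset_right)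

section Topology

variable {Γ : Type*} [Group Γ] [TopologicalSpace Γ] [IsTopologicalGroup Γ] [MeasurableSpace Γ]
  {X : Type*} [TopologicalSpace X] [MulAction Γ X] {B : Set X} {x : X}

lemma measure_inv_smul_mem_ne_zero [ContinuousSMul Γ X] (m : Measure Γ) [m.IsOpenPosMeasure]
    (hB : IsOpen B) (hx : (MulAction.orbit Γ x ∩ B).Nonempty) : m {γ : Γ | γ⁻¹ • x ∈ B} ≠ 0 := by
  obtain ⟨_, ⟨γ, rfl⟩, hγ⟩ := hx
  have hopen : IsOpen {γ : Γ | γ⁻¹ • x ∈ B} :=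
    hB.preimage (by fun_prop : Continuous fun γ : Γ => γ⁻¹ • x)
  exact hopen.measure_ne_zero m ⟨γ⁻¹, by simpa using hγ⟩

lemma measure_inv_smul_mem_ne_top [ProperSMul Γ X] (m : Measure Γ) [IsFiniteMeasureOnCompacts m]
    (hx : IsCompact (closure (MulAction.orbit Γ x ∩ B))) : m {γ : Γ | γ⁻¹ • x ∈ B} ≠ ∞ := by
  have hK := (ProperSMul.isProperMap_smul_pair (G := Γ) (X := X)).isCompact_preimage
    (hx.prod (isCompact_singleton (x := x)))
  refine ((measure_mono ?_).trans_lt (hK.image continuous_fst).inv.measure_lt_top).ne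
  intro γ hγ
  exact ⟨(γ⁻¹, x), ⟨subset_closure ⟨⟨γ⁻¹, rfl⟩, hγ⟩, rfl⟩, rfl⟩

end Topology

section DiagonalAverage

variable {Γ : Type*} [Group Γ] [MeasurableSpace Γ] {X : Type*} [MulAction Γ X]

/-- The average of `f ⊗ k` over the diagonal action of the group: the invariant functions on
`X × X` to which the mass transport principle is applied. -/
noncomputable def diagonalAverage (m : Measure Γ) (f k : X → ℝ≥0∞) (x y : X) : ℝ≥0∞ :=
  ∫⁻ γ : Γ, f (γ⁻¹ • x) * k (γ⁻¹ • y) ∂m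

lemma diagonalAverage_comm (m : Measure Γ) (f k : X → ℝ≥0∞) (x y : X) :
    diagonalAverage m f k x y = diagonalAverage m k f y x := by
  simp only [diagonalAverage, mul_comm]

lemma diagonalAverage_smul_smul [MeasurableMul Γ] (m : Measure Γ) [m.IsMulLeftInvariant]
    (f k : X → ℝ≥0∞) (α : Γ) (x y : X) :
    diagonalAverage m f k (α • x) (α • y) = diagonalAverage m f k x y := by
  rw [diagonalAverage, ← lintegral_mul_left_eq_self _ α]
  simp only [mul_inv_rev, mul_smul, inv_smul_smul, diagonalAverage]

end DiagonalAverage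

section OrbitMeasure

variable {Γ : Type*} [Group Γ] [MeasurableSpace Γ] {X : Type*} [MeasurableSpace X] [MulAction Γ X]

/-- The push-forward of a measure `m` on the group to the orbit of `x`. The inverse makes it
constant along orbits when `m` is left-invariant. For `m` a Haar measure, `orbitMeasure m x C` is
the number `‖Γ_{x,C}‖` of the paper, by `orbitMeasure_apply`. -/
noncomputable def orbitMeasure (m : Measure Γ) (x : X) : Measure X :=
  m.map fun γ => γ⁻¹ • x

/-- The function `1_B h` of the paper, with `h x = ‖Γ_{x,B}‖⁻¹`: it distributes unit mass over the
part of each orbit that lies in `B`. -/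
noncomputable def orbitWeight (m : Measure Γ) (B : Set X) : X → ℝ≥0∞ :=
  B.indicator fun x => (orbitMeasure m x B)⁻¹

variable (Γ) in
/-- The mass transport principle for `ν` relative to `μ`: for every invariant transport rule, the
expected mass sent out of a `ν`-random point equals the expected mass it receives. -/
def MassTransportPrinciple (μ ν : Measure X) : Prop :=
  ∀ g : X → X → ℝ≥0∞, Measurable (Function.uncurry g) →
    (∀ (γ : Γ) (x y : X), g (γ • x) (γ • y) = g x y) →
    ∫⁻ x, (∫⁻ y, g x y ∂μ) ∂ν = ∫⁻ x, (∫⁻ y, g y x ∂μ) ∂ν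

variable [MeasurableInv Γ]

section MeasurableSMul

variable [MeasurableSMul Γ X]

lemma orbitMeasure_apply (m : Measure Γ) (x : X) {C : Set X} (hC : MeasurableSet C) :
    orbitMeasure m x C = m {γ : Γ | γ⁻¹ • x ∈ C} :=
  Measure.map_apply (by fun_prop) hC

lemma lintegral_orbitMeasure (m : Measure Γ) (x : X) {f : X → ℝ≥0∞} (hf : Measurable f) :
    ∫⁻ y, f y ∂orbitMeasure m x = ∫⁻ γ : Γ, f (γ⁻¹ • x) ∂m :=
  lintegral_map hf (by fun_prop)

lemma lintegral_orbitWeight (m : Measure Γ) (μ : Measure X) {B : Set X} (hB : MeasurableSet B) :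
    ∫⁻ x, orbitWeight m B x ∂μ = ∫⁻ x in B, (m {γ : Γ | γ⁻¹ • x ∈ B})⁻¹ ∂μ := by
  simp only [orbitWeight, lintegral_indicator hB, orbitMeasure_apply m _ hB]

variable [MeasurableMul Γ]

lemma orbitMeasure_smul (m : Measure Γ) [m.IsMulLeftInvariant] (α : Γ) (x : X) :
    orbitMeasure m (α • x) = orbitMeasure m x := by
  rw [orbitMeasure, ← map_mul_left_eq_self m α, Measure.map_map (by fun_prop) (by fun_prop)]
  simp only [Function.comp_def, mul_inv_rev, mul_smul, inv_smul_smul, orbitMeasure,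
    map_mul_left_eq_self]

lemma map_inv_smul_orbitMeasure (m : Measure Γ) (α : Γ) (x : X) :
    (orbitMeasure m x).map (α⁻¹ • ·) = orbitMeasure (m.map (· * α)) x := by
  rw [orbitMeasure, orbitMeasure, Measure.map_map (by fun_prop) (by fun_prop),
    Measure.map_map (by fun_prop) (by fun_prop)]
  simp only [Function.comp_def, mul_inv_rev, mul_smul]

end MeasurableSMul

section MeasurableSMul₂

variable [MeasurableSMul₂ Γ X]

lemma measurable_orbitMeasure (m : Measure Γ) [SFinite m] :
    Measurable (orbitMeasure m : X → Measure X) := by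
  refine Measure.measurable_of_measurable_coe _ fun C hC => ?_
  simp only [orbitMeasure_apply m _ hC]
  exact measurable_measure_prodMk_right
    ((by fun_prop : Measurable fun p : Γ × X => p.1⁻¹ • p.2) hC)

lemma lintegral_bind_orbitMeasure (m : Measure Γ) [SFinite m] (ν : Measure X) {f : X → ℝ≥0∞}
    (hf : Measurable f) :
    ∫⁻ x, f x ∂ν.bind (orbitMeasure m) = ∫⁻ x, ∫⁻ y, f y ∂orbitMeasure m x ∂ν :=
  Measure.lintegral_bind (measurable_orbitMeasure m).aemeasurable hf.aemeasurable

lemma measurable_uncurry_diagonalAverage (m : Measure Γ) [SFinite m] {f k : X → ℝ≥0∞}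
    (hf : Measurable f) (hk : Measurable k) :
    Measurable (Function.uncurry (diagonalAverage m f k)) := by
  have hfk : Measurable fun p : (X × X) × Γ => f (p.2⁻¹ • p.1.1) * k (p.2⁻¹ • p.1.2) := by
    fun_prop
  exact hfk.lintegral_prod_right'

lemma lintegral_diagonalAverage (m : Measure Γ) [SFinite m] (μ : Measure X) [SFinite μ]
    [SMulInvariantMeasure Γ X μ] {f k : X → ℝ≥0∞} (hf : Measurable f) (hk : Measurable k) (x : X) :
    ∫⁻ y, diagonalAverage m f k x y ∂μ = (∫⁻ y, f y ∂orbitMeasure m x) * ∫⁻ y, k y ∂μ := by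
  have hmeas : Measurable fun p : X × Γ => f (p.2⁻¹ • x) * k (p.2⁻¹ • p.1) := by fun_prop
  calc ∫⁻ y, ∫⁻ γ : Γ, f (γ⁻¹ • x) * k (γ⁻¹ • y) ∂m ∂μ
      = ∫⁻ γ : Γ, ∫⁻ y, f (γ⁻¹ • x) * k (γ⁻¹ • y) ∂μ ∂m :=
        lintegral_lintegral_swap hmeas.aemeasurable
    _ = ∫⁻ γ : Γ, f (γ⁻¹ • x) * ∫⁻ y, k y ∂μ ∂m := by
        refine lintegral_congr fun γ => ?_
        rw [lintegral_const_mul _ (by fun_prop), (measurePreserving_smul γ⁻¹ μ).lintegral_comp hk]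
    _ = (∫⁻ y, f y ∂orbitMeasure m x) * ∫⁻ y, k y ∂μ := by
        rw [lintegral_mul_const _ (by fun_prop), lintegral_orbitMeasure m x hf]

lemma measurable_orbitWeight (m : Measure Γ) [SFinite m] {B : Set X} (hB : MeasurableSet B) :
    Measurable (orbitWeight m B) :=
  ((Measure.measurable_coe hB).comp (measurable_orbitMeasure m)).inv.indicator hB

variable [MeasurableMul Γ]

lemma lintegral_orbitWeight_orbitMeasure (m : Measure Γ) [SFinite m] [m.IsMulLeftInvariant]
    {B : Set X} (hB : MeasurableSet B) {x : X} (h0 : m {γ : Γ | γ⁻¹ • x ∈ B} ≠ 0)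
    (htop : m {γ : Γ | γ⁻¹ • x ∈ B} ≠ ∞) :
    ∫⁻ y, orbitWeight m B y ∂orbitMeasure m x = 1 := by
  have hconst (γ : Γ) :
      orbitWeight m B (γ⁻¹ • x)
        = {δ : Γ | δ⁻¹ • x ∈ B}.indicator (fun _ => (orbitMeasure m x B)⁻¹) γ := by
    classical
    simp only [orbitWeight, Set.indicator_apply, orbitMeasure_smul, Set.mem_ofPred_eq]
  have hmeas : MeasurableSet {γ : Γ | γ⁻¹ • x ∈ B} :=
    (by fun_prop : Measurable fun γ : Γ => γ⁻¹ • x) hB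
  rw [lintegral_orbitMeasure m x (measurable_orbitWeight m hB), lintegral_congr hconst,
    lintegral_indicator_const hmeas, orbitMeasure_apply m x hB, ENNReal.inv_mul_cancel h0 htop]

namespace MassTransportPrinciple

variable {μ ν : Measure X} [SFinite μ] [SMulInvariantMeasure Γ X μ] (m : Measure Γ) [SFinite m]
  [m.IsMulLeftInvariant] {f k : X → ℝ≥0∞}

lemma lintegral_bind_orbitMeasure_mul_comm (h : MassTransportPrinciple Γ μ ν) (hf : Measurable f)
    (hk : Measurable k) :
    (∫⁻ x, f x ∂ν.bind (orbitMeasure m)) * ∫⁻ x, k x ∂μ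
      = (∫⁻ x, k x ∂ν.bind (orbitMeasure m)) * ∫⁻ x, f x ∂μ := by
  have hmeas {u : X → ℝ≥0∞} (hu : Measurable u) :
      Measurable fun x : X => ∫⁻ y, u y ∂orbitMeasure m x :=
    (Measure.measurable_lintegral hu).comp (measurable_orbitMeasure m)
  calc (∫⁻ x, f x ∂ν.bind (orbitMeasure m)) * ∫⁻ x, k x ∂μ
      = ∫⁻ x, ∫⁻ y, diagonalAverage m f k x y ∂μ ∂ν := by
        simp only [lintegral_diagonalAverage m μ hf hk, lintegral_mul_const _ (hmeas hf),
          lintegral_bind_orbitMeasure m ν hf]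
    _ = ∫⁻ x, ∫⁻ y, diagonalAverage m f k y x ∂μ ∂ν :=
        h _ (measurable_uncurry_diagonalAverage m hf hk) (diagonalAverage_smul_smul m f k)
    _ = (∫⁻ x, k x ∂ν.bind (orbitMeasure m)) * ∫⁻ x, f x ∂μ := by
        simp only [diagonalAverage_comm m f k, lintegral_diagonalAverage m μ hk hf,
          lintegral_mul_const _ (hmeas hk), lintegral_bind_orbitMeasure m ν hk]

lemma lintegral_smul_bind_orbitMeasure_eq (h : MassTransportPrinciple Γ μ ν) (hk : Measurable k)
    (hk1 : ∀ x, ∫⁻ y, k y ∂orbitMeasure m x = 1) :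
    (∫⁻ x, k x ∂μ) • ν.bind (orbitMeasure m) = ν Set.univ • μ := by
  ext C hC
  have hcomm := h.lintegral_bind_orbitMeasure_mul_comm m (measurable_one.indicator hC) hk
  simp only [lintegral_indicator_one hC, lintegral_bind_orbitMeasure m ν hk, hk1,
    lintegral_one] at hcomm
  rw [Measure.smul_apply, Measure.smul_apply, smul_eq_mul, smul_eq_mul, mul_comm, hcomm]

end MassTransportPrinciple

end MeasurableSMul₂

end OrbitMeasure

section Unimodular

variable {Γ : Type*} [Group Γ] [TopologicalSpace Γ] [IsTopologicalGroup Γ]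
  [LocallyCompactSpace Γ] [SigmaCompactSpace Γ] [MeasurableSpace Γ] [BorelSpace Γ]
  {X : Type*} [MeasurableSpace X] [MulAction Γ X] [MeasurableSMul₂ Γ X]

lemma isMulRightInvariant_of_smulInvariant_bind_orbitMeasure (haar : Measure Γ)
    [haar.IsHaarMeasure] (ν : Measure X)
    [SMulInvariantMeasure Γ X (ν.bind (orbitMeasure haar))] {f : X → ℝ≥0∞} (hf : Measurable f)
    (h0 : ∫⁻ x, f x ∂ν.bind (orbitMeasure haar) ≠ 0)
    (htop : ∫⁻ x, f x ∂ν.bind (orbitMeasure haar) ≠ ∞) :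
    haar.IsMulRightInvariant := by
  refine ⟨fun α => ?_⟩
  set c := Measure.haarScalarFactor (haar.map (· * α)) haar
  have hc : haar.map (· * α) = c • haar := eq_haarScalarFactor_smul_of_sigmaCompact _ _
  have hfα : Measurable fun x => f (α⁻¹ • x) := by fun_prop
  have hshift (x : X) :
      ∫⁻ y, f (α⁻¹ • y) ∂orbitMeasure haar x = c * ∫⁻ y, f y ∂orbitMeasure haar x := by
    rw [← lintegral_map hf (measurable_const_smul α⁻¹), map_inv_smul_orbitMeasure, hc,
      orbitMeasure, Measure.map_smul, lintegral_smul_measure, ENNReal.smul_def, smul_eq_mul,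
      orbitMeasure]
  have hscale : c * ∫⁻ x, f x ∂ν.bind (orbitMeasure haar)
      = 1 * ∫⁻ x, f x ∂ν.bind (orbitMeasure haar) :=
    calc c * ∫⁻ x, f x ∂ν.bind (orbitMeasure haar)
        = ∫⁻ x, f (α⁻¹ • x) ∂ν.bind (orbitMeasure haar) := by
          rw [lintegral_bind_orbitMeasure haar ν hf, lintegral_bind_orbitMeasure haar ν hfα,
            lintegral_congr hshift, lintegral_const_mul' _ _ ENNReal.coe_ne_top]
      _ = 1 * ∫⁻ x, f x ∂ν.bind (orbitMeasure haar) := by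
          rw [(measurePreserving_smul α⁻¹ _).lintegral_comp hf, one_mul]
  have hc1 : (c : ℝ≥0∞) = 1 := (ENNReal.mul_left_inj h0 htop).1 hscale
  rw [hc, ENNReal.coe_eq_one.1 hc1, one_smul]

theorem stmt3_general (haar : Measure Γ) [haar.IsHaarMeasure]
    (μ : Measure X) [SigmaFinite μ] (hμ0 : μ ≠ 0)
    (hpres : ∀ γ : Γ, Measure.map (fun x : X => γ • x) μ = μ)
    (B : Set X) (hB : MeasurableSet B)
    (hB0 : ∀ x : X, haar {γ : Γ | γ⁻¹ • x ∈ B} ≠ 0)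
    (hBtop : ∀ x : X, haar {γ : Γ | γ⁻¹ • x ∈ B} ≠ ∞)
    (ν : Measure X) [IsProbabilityMeasure ν] (hMTP : MassTransportPrinciple Γ μ ν) :
    haar.IsMulRightInvariant ∧
    (∫⁻ x in B, (haar {γ : Γ | γ⁻¹ • x ∈ B})⁻¹ ∂μ) < ⊤ ∧
    0 < (∫⁻ x in B, (haar {γ : Γ | γ⁻¹ • x ∈ B})⁻¹ ∂μ) ∧
    ∀ C : Set X, MeasurableSet C →
      ∫⁻ x, haar {γ : Γ | γ⁻¹ • x ∈ C} ∂ν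
        = (∫⁻ x in B, (haar {γ : Γ | γ⁻¹ • x ∈ B})⁻¹ ∂μ)⁻¹ * μ C := by
  have : SMulInvariantMeasure Γ X μ := ((smulInvariantMeasure_tfae Γ μ).out 0 5).2 hpres
  have hw : Measurable (orbitWeight haar B) := measurable_orbitWeight haar hB
  have hw1 (x : X) : ∫⁻ y, orbitWeight haar B y ∂orbitMeasure haar x = 1 :=
    lintegral_orbitWeight_orbitMeasure haar hB (hB0 x) (hBtop x)
  rw [← lintegral_orbitWeight haar μ hB]
  set I := ∫⁻ x, orbitWeight haar B x ∂μ
  set η := ν.bind (orbitMeasure haar) with hη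
  have hIη : I • η = μ := by
    simpa using hMTP.lintegral_smul_bind_orbitMeasure_eq haar hw hw1
  have hI0 : I ≠ 0 := fun h => hμ0 (by rw [← hIη, h, zero_smul])
  have : SigmaFinite (I • η) := hIη ▸ inferInstance
  have hItop : I ≠ ∞ := ne_top_of_sigmaFinite_smul (hIη ▸ hμ0)
  have hημ : η = I⁻¹ • μ := by
    rw [← hIη, smul_smul, ENNReal.inv_mul_cancel hI0 hItop, one_smul]
  have hηw : ∫⁻ x, orbitWeight haar B x ∂η = 1 := by
    simp [hη, lintegral_bind_orbitMeasure haar ν hw, hw1]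
  have : SMulInvariantMeasure Γ X η := hημ ▸ inferInstance
  refine ⟨isMulRightInvariant_of_smulInvariant_bind_orbitMeasure haar ν hw
    (by simp [← hη, hηw]) (by simp [← hη, hηw]), hItop.lt_top, pos_iff_ne_zero.2 hI0,
    fun C hC => ?_⟩
  rw [← smul_eq_mul, ← Measure.smul_apply, ← hημ, hη,
    Measure.bind_apply hC (measurable_orbitMeasure haar).aemeasurable]
  simp only [orbitMeasure_apply haar _ hC]

end Unimodular

/-- In the setting of Statement 1, suppose `ν` is a Borel probability measure
on `X` satisfying the mass transport principle
`∫ (∫ g x y dμ y) dν x = ∫ (∫ g y x dμ y) dν x` for every `Γ`-invariant measurable `g`.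
Then (a) `Γ` is unimodular; (b) `∫_B h dμ < ∞`; and (c) with `b = (∫_B h dμ)⁻¹ ∈ (0,∞)`,
for every Borel set `C ⊆ X`, `∫ ‖{γ | γ⁻¹ • x ∈ C}‖ dν x = b · μ C`. -/
theorem stmt3 {Γ : Type*} [Group Γ] [TopologicalSpace Γ] [IsTopologicalGroup Γ]
    [LocallyCompactSpace Γ] [SigmaCompactSpace Γ] [T2Space Γ]
    [MeasurableSpace Γ] [BorelSpace Γ]
    {X : Type*} [MetricSpace X] [ProperSpace X] [MeasurableSpace X] [BorelSpace X]
    [MulAction Γ X] [ContinuousSMul Γ X]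
    (haar : Measure Γ) [haar.IsHaarMeasure]
    (μ : Measure X) (hμ0 : μ ≠ 0)
    (hμfin : ∀ s : Set X, Bornology.IsBounded s → μ s < ⊤)
    (hiso : ∀ γ : Γ, Isometry fun x : X => γ • x)
    (hpres : ∀ γ : Γ, Measure.map (fun x : X => γ • x) μ = μ)
    (hproper : IsProperMap fun p : Γ × X => (p.1 • p.2, p.2))
    (B : Set X) (hBopen : IsOpen B)
    (hBmeet : ∀ x : X, (MulAction.orbit Γ x ∩ B).Nonempty)
    (hBbdd : ∀ x : X, Bornology.IsBounded (MulAction.orbit Γ x ∩ B))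
    (ν : Measure X) [IsProbabilityMeasure ν]
    (hMTP : ∀ g : X → X → ℝ≥0∞, Measurable (Function.uncurry g) →
      (∀ (γ : Γ) (x y : X), g (γ • x) (γ • y) = g x y) →
      ∫⁻ x, (∫⁻ y, g x y ∂μ) ∂ν = ∫⁻ x, (∫⁻ y, g y x ∂μ) ∂ν) :
    haar.IsMulRightInvariant ∧
    (∫⁻ x in B, (haar {γ : Γ | γ⁻¹ • x ∈ B})⁻¹ ∂μ) < ⊤ ∧
    0 < (∫⁻ x in B, (haar {γ : Γ | γ⁻¹ • x ∈ B})⁻¹ ∂μ) ∧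
    ∀ C : Set X, MeasurableSet C →
      ∫⁻ x, haar {γ : Γ | γ⁻¹ • x ∈ C} ∂ν
        = (∫⁻ x in B, (haar {γ : Γ | γ⁻¹ • x ∈ B})⁻¹ ∂μ)⁻¹ * μ C := by
  have : ProperSMul Γ X := ⟨hproper⟩
  have : IsFiniteMeasureOnCompacts μ := ⟨fun _ hK => hμfin _ hK.isBounded⟩
  exact stmt3_general haar μ hμ0 hpres B hBopen.measurableSet
    (fun x => measure_inv_smul_mem_ne_zero haar hBopen (hBmeet x))
    (fun x => measure_inv_smul_mem_ne_top haar (hBbdd x).isCompact_closure) ν hMTP
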